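/- Universal approximation in weighted Sobolev norms (Theorem UAT_L2_noL): let w, q ≥ 1 and let μ, μ' be Borel probability measures on H with ‖μ‖_q < ∞ and ‖μ'‖_w < ∞. Then for every v ∈ C²_{w,q}(H) and every ε > 0, there exist d ∈ ℕ and f ∈ 𝒩_d such that the cylindrical function w_f satisfies ∫_H |v(x) − w_f(x)|^w μ(dx) < ε, ∫_H ‖Dv(x) − Dw_f(x)‖^w μ(dx) < ε, and ∫_{H×H} ‖(D²v(x) − D²w_f(x)) h‖^w μ(dx) μ'(dh) < ε. -/

import Mathlib

open Filter Topology MeasureTheory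
open scoped RealInnerProductSpace ENNReal

/-- The coordinate map `x ↦ (⟪e 0, x⟫, …, ⟪e (d-1), x⟫)` of a Hilbert space with respect to the
first `d` elements of a sequence `e`. -/
noncomputable def euclCoord {H : Type*} [NormedAddCommGroup H] [InnerProductSpace ℝ H]
    (e : ℕ → H) (d : ℕ) (x : H) : EuclideanSpace ℝ (Fin d) :=
  WithLp.toLp 2 (fun i : Fin d => ⟪e i, x⟫)

/-- The cylindrical function (Hilbert–Galerkin Neural Operator) with inner network `f`. -/
noncomputable def cyl {H : Type*} [NormedAddCommGroup H] [InnerProductSpace ℝ H]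
    (e : ℕ → H) {d : ℕ} (f : EuclideanSpace ℝ (Fin d) → ℝ) (x : H) : ℝ :=
  f (euclCoord e d x)

/-!
Replace `v` first by `v ∘ P_d`. Its jets converge pointwise to those of `v` and inherit the growth
bound because `P_d` is a contraction, so dominated convergence gives convergence of the energies;
the Hessians `P_d D²v(P_d x) P_d` converge only strongly, which is why the error is averaged over
directions drawn from `μ'`. Writing `P_d = A† A` with `A : H → ℝ^d` the coordinate map,
`v ∘ P_d = h ∘ A` for `h = v ∘ A†`, and `h` has finite weighted Sobolev norm for the image measure
`A_* μ`. The density property supplies `f` close to `h` in that norm, and composing with the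
contraction `A` carries the estimate back to `H`.
-/

section PowerIntegrals

variable {X G : Type*} [NormedAddCommGroup G]

lemma ofReal_norm_rpow {w : ℝ} (hw : 0 ≤ w) (a : G) : ENNReal.ofReal (‖a‖ ^ w) = ‖a‖ₑ ^ w := by
  rw [← ENNReal.ofReal_rpow_of_nonneg (norm_nonneg a) hw, ofReal_norm]

variable [MeasurableSpace X] {μ : Measure X} {w : ℝ}

lemma lintegral_enorm_add_rpow_le (hw : 0 ≤ w) {a : X → G}
    (ha : AEMeasurable (fun x => ‖a x‖ₑ ^ w) μ) (b : X → G) :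
    ∫⁻ x, ‖a x + b x‖ₑ ^ w ∂μ ≤ ENNReal.LpAddConst (ENNReal.ofReal w)⁻¹ *
      (∫⁻ x, ‖a x‖ₑ ^ w ∂μ + ∫⁻ x, ‖b x‖ₑ ^ w ∂μ) := by
  rw [← lintegral_add_left' ha, ← lintegral_const_mul' _ _ (ENNReal.LpAddConst_lt_top _).ne]
  refine lintegral_mono fun x => ?_
  exact (ENNReal.rpow_le_rpow (enorm_add_le _ _) hw).trans
    (ENNReal.rpow_add_le_mul_rpow_add_rpow' _ _ hw)

theorem tendsto_lintegral_enorm_sub_rpow (hw : 0 < w) {a : X → G} {b : ℕ → X → G} {g : X → ℝ≥0∞}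
    (hmeas : ∀ n, AEMeasurable (fun x => ‖a x - b n x‖ₑ ^ w) μ)
    (hbg : ∀ n x, ‖b n x‖ₑ ^ w ≤ g x) (hg : ∫⁻ x, g x ∂μ ≠ ∞)
    (hlim : ∀ x, Tendsto (fun n => b n x) atTop (𝓝 (a x))) :
    Tendsto (fun n => ∫⁻ x, ‖a x - b n x‖ₑ ^ w ∂μ) atTop (𝓝 0) := by
  set c := ENNReal.LpAddConst (ENNReal.ofReal w)⁻¹
  have hc : c ≠ ∞ := (ENNReal.LpAddConst_lt_top _).ne
  have hag (x : X) : ‖a x‖ₑ ^ w ≤ g x :=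
    le_of_tendsto' ((ENNReal.continuous_rpow_const.tendsto _).comp (hlim x).enorm) (hbg · x)
  have hbound (n : ℕ) (x : X) : ‖a x - b n x‖ₑ ^ w ≤ c * (2 * g x) :=
    calc ‖a x - b n x‖ₑ ^ w ≤ (‖a x‖ₑ + ‖b n x‖ₑ) ^ w :=
          ENNReal.rpow_le_rpow enorm_sub_le hw.le
      _ ≤ c * (‖a x‖ₑ ^ w + ‖b n x‖ₑ ^ w) := ENNReal.rpow_add_le_mul_rpow_add_rpow' _ _ hw.le
      _ ≤ c * (2 * g x) := by
          rw [two_mul]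
          gcongr
          exacts [hag x, hbg n x]
  have hfin : ∫⁻ x, c * (2 * g x) ∂μ ≠ ∞ := by
    rw [lintegral_const_mul' _ _ hc, lintegral_const_mul' _ _ ENNReal.ofNat_ne_top]
    exact ENNReal.mul_ne_top hc (ENNReal.mul_ne_top ENNReal.ofNat_ne_top hg)
  have hzero (x : X) : Tendsto (fun n => ‖a x - b n x‖ₑ ^ w) atTop (𝓝 0) := by
    have h := ((hlim x).const_sub (a x)).enorm.ennrpow_const w
    rwa [sub_self, enorm_zero, ENNReal.zero_rpow_of_pos hw] at h
  simpa using tendsto_lintegral_of_dominated_convergence' _ hmeas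
    (fun n => ae_of_all _ (hbound n)) hfin (ae_of_all _ hzero)

end PowerIntegrals

section BoundedOperators

variable {𝕜 E F ι : Type*} [NontriviallyNormedField 𝕜] [NormedAddCommGroup E] [NormedSpace 𝕜 E]
  [NormedAddCommGroup F] [NormedSpace 𝕜 F]

theorem tendsto_clm_apply_of_norm_le {l : Filter ι} {T : ι → E →L[𝕜] F} {M : ℝ}
    (hT : ∀ i, ‖T i‖ ≤ M) {x : E} {y : F} (hTx : Tendsto (fun i => T i x) l (𝓝 y))
    {u : ι → E} (hu : Tendsto u l (𝓝 x)) : Tendsto (fun i => T i (u i)) l (𝓝 y) := by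
  have herr : Tendsto (fun i => T i (u i - x)) l (𝓝 0) := by
    refine squeeze_zero_norm (fun i => (T i).le_of_opNorm_le (hT i) _) ?_
    simpa using ((tendsto_iff_norm_sub_tendsto_zero.1 hu).const_mul M)
  simpa using herr.add hTx

lemma enorm_clm_apply_le {T : E →L[𝕜] F} (hT : ‖T‖ ≤ 1) (x : E) : ‖T x‖ₑ ≤ ‖x‖ₑ :=
  enorm_le_iff_norm_le.2 (by simpa using T.le_of_opNorm_le hT x)

end BoundedOperators

section SecondJets

variable {E F : Type*} [NormedAddCommGroup E] [InnerProductSpace ℝ E]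
  [NormedAddCommGroup F] [InnerProductSpace ℝ F]

/-- The space of second-order jets of real functions on `E` at a point: a value, a gradient and
a Hessian operator. -/
abbrev SecondJet (E : Type*) [NormedAddCommGroup E] [InnerProductSpace ℝ E] : Type _ :=
  ℝ × E × (E →L[ℝ] E)

/-- The integrand `|a| ^ w + ‖p‖ ^ w + ‖T‖ ^ w` of the weighted Sobolev norm, at the jet
`(a, p, T)`. -/
noncomputable def jetDensity (w : ℝ) (j : SecondJet E) : ℝ≥0∞ :=
  ‖j.1‖ₑ ^ w + ‖j.2.1‖ₑ ^ w + ‖j.2.2‖ₑ ^ w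

lemma ofReal_eq_jetDensity {w : ℝ} (hw : 0 ≤ w) (a : ℝ) (p : E) (T : E →L[ℝ] E) :
    ENNReal.ofReal (|a| ^ w + ‖p‖ ^ w + ‖T‖ ^ w) = jetDensity w (a, p, T) := by
  rw [ENNReal.ofReal_add (by positivity) (by positivity),
    ENNReal.ofReal_add (by positivity) (by positivity), ← Real.norm_eq_abs,
    ofReal_norm_rpow hw, ofReal_norm_rpow hw, ofReal_norm_rpow hw, jetDensity]

lemma continuous_jetDensity (w : ℝ) : Continuous (jetDensity w : SecondJet E → ℝ≥0∞) := by
  unfold jetDensity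
  fun_prop

lemma enorm_fst_rpow_le_jetDensity (w : ℝ) (j : SecondJet E) : ‖j.1‖ₑ ^ w ≤ jetDensity w j :=
  le_self_add.trans le_self_add

lemma enorm_gradient_rpow_le_jetDensity (w : ℝ) (j : SecondJet E) :
    ‖j.2.1‖ₑ ^ w ≤ jetDensity w j :=
  le_add_self.trans le_self_add

lemma enorm_hessian_rpow_le_jetDensity (w : ℝ) (j : SecondJet E) :
    ‖j.2.2‖ₑ ^ w ≤ jetDensity w j :=
  le_add_self

lemma enorm_hessian_apply_rpow_le {w : ℝ} (hw : 0 ≤ w) (j : SecondJet E) (k : E) :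
    ‖j.2.2 k‖ₑ ^ w ≤ jetDensity w j * ‖k‖ₑ ^ w :=
  calc ‖j.2.2 k‖ₑ ^ w ≤ (‖j.2.2‖ₑ * ‖k‖ₑ) ^ w :=
        ENNReal.rpow_le_rpow (j.2.2.le_opENorm k) hw
    _ = ‖j.2.2‖ₑ ^ w * ‖k‖ₑ ^ w := ENNReal.mul_rpow_of_nonneg _ _ hw
    _ ≤ jetDensity w j * ‖k‖ₑ ^ w := by gcongr; exact enorm_hessian_rpow_le_jetDensity w j

variable [CompleteSpace E] [CompleteSpace F]

/-- The jet `(u x, Du(x), D²u(x))`, with the Hessian read as the derivative of the gradient map. -/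
noncomputable def secondJet (u : E → ℝ) (x : E) : SecondJet E :=
  (u x, gradient u x, fderiv ℝ (gradient u) x)

/-- The jet at `x` of a composition `u ∘ L` with `L` linear, as a function of the jet of `u` at
`L x`. -/
noncomputable def pullbackJet (L : E →L[ℝ] F) (j : SecondJet F) : SecondJet E :=
  (j.1, L.adjoint j.2.1, L.adjoint ∘L j.2.2 ∘L L)

lemma pullbackJet_sub (L : E →L[ℝ] F) (j j' : SecondJet F) :
    pullbackJet L (j - j') = pullbackJet L j - pullbackJet L j' := by
  simp [pullbackJet, ContinuousLinearMap.sub_comp, ContinuousLinearMap.comp_sub]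

lemma jetDensity_pullbackJet_le {w : ℝ} (hw : 0 ≤ w) {L : E →L[ℝ] F} (hL : ‖L‖ ≤ 1)
    (j : SecondJet F) : jetDensity w (pullbackJet L j) ≤ jetDensity w j := by
  have hL' : ‖L.adjoint‖ ≤ 1 := by rwa [LinearIsometryEquiv.norm_map]
  have hhess : ‖L.adjoint ∘L j.2.2 ∘L L‖ ≤ ‖j.2.2‖ :=
    calc ‖L.adjoint ∘L j.2.2 ∘L L‖ ≤ ‖L.adjoint‖ * (‖j.2.2‖ * ‖L‖) :=
          (L.adjoint.opNorm_comp_le _).trans (by gcongr; exact j.2.2.opNorm_comp_le L)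
      _ ≤ 1 * (‖j.2.2‖ * 1) := by gcongr
      _ = ‖j.2.2‖ := by ring
  exact add_le_add (add_le_add le_rfl (ENNReal.rpow_le_rpow (enorm_clm_apply_le hL' _) hw))
    (ENNReal.rpow_le_rpow (enorm_le_iff_norm_le.2 hhess) hw)

lemma contDiff_gradient {m n : WithTop ℕ∞} {u : E → ℝ} (hu : ContDiff ℝ n u) (hmn : m + 1 ≤ n) :
    ContDiff ℝ m (gradient u) :=
  (InnerProductSpace.toDual ℝ E).symm.toContinuousLinearEquiv.contDiff.comp (hu.fderiv_right hmn)

lemma continuous_secondJet {u : E → ℝ} (hu : ContDiff ℝ 2 u) : Continuous (secondJet u) :=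
  have hgrad : ContDiff ℝ 1 (gradient u) := contDiff_gradient hu (by norm_num)
  hu.continuous.prodMk (hgrad.continuous.prodMk (hgrad.continuous_fderiv one_ne_zero))

lemma gradient_comp_clm {u : F → ℝ} (L : E →L[ℝ] F) {x : E} (hu : DifferentiableAt ℝ u (L x)) :
    gradient (u ∘ L) x = L.adjoint (gradient u (L x)) := by
  refine ext_inner_right ℝ fun y => ?_
  rw [inner_gradient_left, ContinuousLinearMap.adjoint_inner_left, inner_gradient_left,
    fderiv_comp x hu L.differentiableAt, L.fderiv, ContinuousLinearMap.comp_apply]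

lemma secondJet_comp_clm {u : F → ℝ} (hu : ContDiff ℝ 2 u) (L : E →L[ℝ] F) (x : E) :
    secondJet (u ∘ L) x = pullbackJet L (secondJet u (L x)) := by
  have hgrad : gradient (u ∘ L) = L.adjoint ∘ gradient u ∘ L :=
    funext fun z => gradient_comp_clm L (hu.differentiable two_ne_zero (L z))
  have hgradu : DifferentiableAt ℝ (gradient u) (L x) :=
    (contDiff_gradient (m := 1) hu (by norm_num)).differentiable one_ne_zero (L x)
  have hhess : HasFDerivAt (gradient (u ∘ L))
      (L.adjoint ∘L fderiv ℝ (gradient u) (L x) ∘L L) x := by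
    rw [hgrad]
    exact L.adjoint.hasFDerivAt.comp x (hgradu.hasFDerivAt.comp x L.hasFDerivAt)
  rw [secondJet, hhess.fderiv, hgrad]
  rfl

/-- The weighted Sobolev density property of a class `S` of functions at the exponent `w`: every
`C²` function with finite weighted Sobolev norm with respect to a finite measure is approximated
in that norm by members of `S`. -/
def WeightedSobolevDense [MeasurableSpace E] (w : ℝ) (S : Set (E → ℝ)) : Prop :=
  ∀ ν : Measure E, IsFiniteMeasure ν → ∀ h : E → ℝ, ContDiff ℝ 2 h →
    ∫⁻ y, jetDensity w (secondJet h y) ∂ν < ⊤ →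
    ∀ ε > 0, ∃ f ∈ S,
      ∫⁻ y, jetDensity w (secondJet h y - secondJet f y) ∂ν < ENNReal.ofReal ε

end SecondJets

section JetEnergy

variable {E : Type*} [NormedAddCommGroup E] [InnerProductSpace ℝ E] [MeasurableSpace E]
  {w : ℝ} {μ μ' : Measure E}

/-- The weighted Sobolev energy of a jet field `J = (a, p, T)`: the sum of `∫ |a| ^ w ∂μ`,
`∫ ‖p‖ ^ w ∂μ` and `∫ ‖T(x) k‖ ^ w μ(dx) μ'(dk)`. The Hessian part is tested against random
directions `k`, because finite-rank truncations of `T` converge only strongly. -/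
noncomputable def jetEnergy (w : ℝ) (μ μ' : Measure E) (J : E → SecondJet E) : ℝ≥0∞ :=
  ∫⁻ x, ‖(J x).1‖ₑ ^ w ∂μ + ∫⁻ x, ‖(J x).2.1‖ₑ ^ w ∂μ
    + ∫⁻ p, ‖(J p.1).2.2 p.2‖ₑ ^ w ∂(μ.prod μ')

variable [BorelSpace E] [SecondCountableTopology E]

theorem jetEnergy_add_le (hw : 0 ≤ w) {J : E → SecondJet E} (hJ : Continuous J)
    (K : E → SecondJet E) :
    jetEnergy w μ μ' (J + K) ≤ ENNReal.LpAddConst (ENNReal.ofReal w)⁻¹ *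
      (jetEnergy w μ μ' J + jetEnergy w μ μ' K) := by
  have hvalue := lintegral_enorm_add_rpow_le (μ := μ) hw
    (a := fun x => (J x).1) (Continuous.aemeasurable (by fun_prop)) fun x => (K x).1
  have hgrad := lintegral_enorm_add_rpow_le (μ := μ) hw
    (a := fun x => (J x).2.1) (Continuous.aemeasurable (by fun_prop)) fun x => (K x).2.1
  have hhess := lintegral_enorm_add_rpow_le (μ := μ.prod μ') hw
    (a := fun p => (J p.1).2.2 p.2) (Continuous.aemeasurable (by fun_prop)) fun p => (K p.1).2.2 p.2
  refine (add_le_add (add_le_add hvalue hgrad) hhess).trans_eq ?_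
  simp only [jetEnergy]
  ring

theorem jetEnergy_le [SFinite μ'] (hw : 0 ≤ w) {J : E → SecondJet E} (hJ : Continuous J) :
    jetEnergy w μ μ' J ≤ (2 + ∫⁻ k, ‖k‖ₑ ^ w ∂μ') * ∫⁻ x, jetDensity w (J x) ∂μ := by
  have hdens : AEMeasurable (fun x => jetDensity w (J x)) μ :=
    ((continuous_jetDensity w).comp hJ).aemeasurable
  have hhess : ∫⁻ p, ‖(J p.1).2.2 p.2‖ₑ ^ w ∂(μ.prod μ') ≤
      (∫⁻ x, jetDensity w (J x) ∂μ) * ∫⁻ k, ‖k‖ₑ ^ w ∂μ' := by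
    rw [← lintegral_prod_mul hdens (by fun_prop)]
    exact lintegral_mono fun p => enorm_hessian_apply_rpow_le hw _ _
  calc jetEnergy w μ μ' J
      ≤ ∫⁻ x, jetDensity w (J x) ∂μ + ∫⁻ x, jetDensity w (J x) ∂μ
          + (∫⁻ x, jetDensity w (J x) ∂μ) * ∫⁻ k, ‖k‖ₑ ^ w ∂μ' := by
        refine add_le_add (add_le_add ?_ ?_) hhess
        · exact lintegral_mono fun x => enorm_fst_rpow_le_jetDensity w _
        · exact lintegral_mono fun x => enorm_gradient_rpow_le_jetDensity w _
    _ = (2 + ∫⁻ k, ‖k‖ₑ ^ w ∂μ') * ∫⁻ x, jetDensity w (J x) ∂μ := by ring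

theorem tendsto_jetEnergy_sub [SFinite μ'] (hw : 0 < w) {J : E → SecondJet E}
    {K : ℕ → E → SecondJet E} (hJ : Continuous J) (hK : ∀ n, Continuous (K n)) {g : E → ℝ≥0∞}
    (hgm : AEMeasurable g μ) (hKg : ∀ n x, jetDensity w (K n x) ≤ g x) (hg : ∫⁻ x, g x ∂μ ≠ ∞)
    (hμ' : ∫⁻ k, ‖k‖ₑ ^ w ∂μ' ≠ ∞)
    (hvalue : ∀ x, Tendsto (fun n => (K n x).1) atTop (𝓝 (J x).1))
    (hgrad : ∀ x, Tendsto (fun n => (K n x).2.1) atTop (𝓝 (J x).2.1))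
    (hhess : ∀ x k, Tendsto (fun n => (K n x).2.2 k) atTop (𝓝 ((J x).2.2 k))) :
    Tendsto (fun n => jetEnergy w μ μ' (J - K n)) atTop (𝓝 0) := by
  have hprod : ∫⁻ p : E × E, g p.1 * ‖p.2‖ₑ ^ w ∂(μ.prod μ') ≠ ∞ := by
    rw [lintegral_prod_mul (g := fun k => ‖k‖ₑ ^ w) hgm (by fun_prop)]
    exact ENNReal.mul_ne_top hg hμ'
  have hvalue' := tendsto_lintegral_enorm_sub_rpow hw
    (fun n => Continuous.aemeasurable (by fun_prop))
    (fun n x => (enorm_fst_rpow_le_jetDensity w _).trans (hKg n x)) hg hvalue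
  have hgrad' := tendsto_lintegral_enorm_sub_rpow hw
    (fun n => Continuous.aemeasurable (by fun_prop))
    (fun n x => (enorm_gradient_rpow_le_jetDensity w _).trans (hKg n x)) hg hgrad
  have hhess' := tendsto_lintegral_enorm_sub_rpow (a := fun p : E × E => (J p.1).2.2 p.2)
    hw (fun n => Continuous.aemeasurable (by fun_prop))
    (fun n p => (enorm_hessian_apply_rpow_le hw.le _ _).trans (by gcongr; exact hKg n p.1)) hprod
    (fun p => hhess p.1 p.2)
  have hsum := (hvalue'.add hgrad').add hhess'
  rw [add_zero, add_zero] at hsum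
  exact hsum

end JetEnergy

section Truncation

open scoped NNReal

variable {E : Type*} [NormedAddCommGroup E] [InnerProductSpace ℝ E] [CompleteSpace E]
  [MeasurableSpace E] [BorelSpace E] {w : ℝ} {μ μ' : Measure E}

section Pullback

variable {F : Type*} [NormedAddCommGroup F] [InnerProductSpace ℝ F] [CompleteSpace F]
  [MeasurableSpace F] [BorelSpace F]

theorem lintegral_jetDensity_comp_adjoint_le (hw : 0 ≤ w) {v : E → ℝ} (hv : ContDiff ℝ 2 v)
    {L : E →L[ℝ] F} (hL : ‖L‖ ≤ 1) {φ : ℝ≥0 → ℝ≥0∞} (hφ : Monotone φ)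
    (hvφ : ∀ x, jetDensity w (secondJet v x) ≤ φ ‖x‖₊) :
    ∫⁻ y, jetDensity w (secondJet (v ∘ L.adjoint) y) ∂(μ.map L) ≤ ∫⁻ x, φ ‖x‖₊ ∂μ := by
  have hL' : ‖L.adjoint‖ ≤ 1 := by rwa [LinearIsometryEquiv.norm_map]
  have hmeas : Measurable fun y => jetDensity w (secondJet (v ∘ L.adjoint) y) :=
    ((continuous_jetDensity w).comp
      (continuous_secondJet (hv.comp L.adjoint.contDiff))).measurable
  rw [lintegral_map hmeas L.continuous.measurable]
  refine lintegral_mono fun x => ?_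
  calc jetDensity w (secondJet (v ∘ L.adjoint) (L x))
      ≤ jetDensity w (secondJet v (L.adjoint (L x))) := by
        rw [secondJet_comp_clm hv]
        exact jetDensity_pullbackJet_le hw hL' _
    _ ≤ φ ‖L.adjoint (L x)‖₊ := hvφ _
    _ ≤ φ ‖x‖₊ := hφ (ENNReal.coe_le_coe.1
        ((enorm_clm_apply_le hL' _).trans (enorm_clm_apply_le hL x)))

theorem jetEnergy_comp_sub_comp_le [SecondCountableTopology E] [SFinite μ'] (hw : 0 ≤ w)
    {f g : F → ℝ} (hf : ContDiff ℝ 2 f) (hg : ContDiff ℝ 2 g)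
    {L : E →L[ℝ] F} (hL : ‖L‖ ≤ 1) :
    jetEnergy w μ μ' (secondJet (f ∘ L) - secondJet (g ∘ L)) ≤
      (2 + ∫⁻ k, ‖k‖ₑ ^ w ∂μ') *
        ∫⁻ y, jetDensity w (secondJet f y - secondJet g y) ∂(μ.map L) := by
  have hdens : Measurable fun y => jetDensity w (secondJet f y - secondJet g y) :=
    ((continuous_jetDensity w).comp
      ((continuous_secondJet hf).sub (continuous_secondJet hg))).measurable
  rw [lintegral_map hdens L.continuous.measurable]
  refine (jetEnergy_le hw ((continuous_secondJet (hf.comp L.contDiff)).sub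
    (continuous_secondJet (hg.comp L.contDiff)))).trans ?_
  gcongr with x
  rw [Pi.sub_apply, secondJet_comp_clm hf, secondJet_comp_clm hg, ← pullbackJet_sub]
  exact jetDensity_pullbackJet_le hw hL _

end Pullback

variable [SecondCountableTopology E] [SFinite μ']

theorem tendsto_jetEnergy_sub_comp (hw : 0 < w) {v : E → ℝ} (hv : ContDiff ℝ 2 v)
    {P : ℕ → E →L[ℝ] E} (hP : ∀ n, ‖P n‖ ≤ 1) (hPlim : ∀ x, Tendsto (P · x) atTop (𝓝 x))
    (hPadj : ∀ x, Tendsto (fun n => (P n).adjoint x) atTop (𝓝 x))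
    {φ : ℝ≥0 → ℝ≥0∞} (hφ : Monotone φ) (hvφ : ∀ x, jetDensity w (secondJet v x) ≤ φ ‖x‖₊)
    (hφμ : ∫⁻ x, φ ‖x‖₊ ∂μ ≠ ∞) (hμ' : ∫⁻ k, ‖k‖ₑ ^ w ∂μ' ≠ ∞) :
    Tendsto (fun n => jetEnergy w μ μ' (secondJet v - secondJet (v ∘ P n))) atTop (𝓝 0) := by
  have hPadj_norm (n : ℕ) : ‖(P n).adjoint‖ ≤ 1 := by
    rw [LinearIsometryEquiv.norm_map]
    exact hP n
  have hjet (n : ℕ) (x : E) := secondJet_comp_clm hv (P n) x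
  have hjetlim (x : E) : Tendsto (fun n => secondJet v (P n x)) atTop (𝓝 (secondJet v x)) :=
    ((continuous_secondJet hv).tendsto x).comp (hPlim x)
  refine tendsto_jetEnergy_sub hw (continuous_secondJet hv)
    (fun n => continuous_secondJet (hv.comp (P n).contDiff))
    (hφ.measurable.comp measurable_nnnorm).aemeasurable (fun n x => ?_) hφμ hμ' (fun x => ?_)
    (fun x => ?_) (fun x k => ?_)
  · rw [hjet]
    exact (jetDensity_pullbackJet_le hw.le (hP n) _).trans ((hvφ _).trans
      (hφ (ENNReal.coe_le_coe.1 (enorm_clm_apply_le (hP n) x))))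
  · exact (hjetlim x).fst_nhds
  · simp only [hjet]
    exact tendsto_clm_apply_of_norm_le hPadj_norm (hPadj _) (hjetlim x).snd_nhds.fst_nhds
  · have hhess : Tendsto (fun n => (secondJet v (P n x)).2.2 (P n k)) atTop
        (𝓝 ((secondJet v x).2.2 k)) :=
      (isBoundedBilinearMap_apply.continuous.tendsto ((secondJet v x).2.2, k)).comp
        ((hjetlim x).snd_nhds.snd_nhds.prodMk_nhds (hPlim k))
    simp only [hjet]
    exact tendsto_clm_apply_of_norm_le hPadj_norm (hPadj _) hhess

theorem exists_comp_jetEnergy_sub_lt [IsFiniteMeasure μ] {F : ℕ → Type*}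
    [∀ d, NormedAddCommGroup (F d)] [∀ d, InnerProductSpace ℝ (F d)] [∀ d, CompleteSpace (F d)]
    [∀ d, MeasurableSpace (F d)] [∀ d, BorelSpace (F d)] (hw : 0 < w)
    {N : ∀ d, Set (F d → ℝ)} (hNsmooth : ∀ d, ∀ f ∈ N d, ContDiff ℝ 2 f)
    (hNdense : ∀ d, WeightedSobolevDense w (N d)) {L : ∀ d, E →L[ℝ] F d} (hL : ∀ d, ‖L d‖ ≤ 1)
    (hLlim : ∀ x, Tendsto (fun d => (L d).adjoint (L d x)) atTop (𝓝 x))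
    {v : E → ℝ} (hv : ContDiff ℝ 2 v) {φ : ℝ≥0 → ℝ≥0∞} (hφ : Monotone φ)
    (hvφ : ∀ x, jetDensity w (secondJet v x) ≤ φ ‖x‖₊) (hφμ : ∫⁻ x, φ ‖x‖₊ ∂μ ≠ ∞)
    (hμ' : ∫⁻ k, ‖k‖ₑ ^ w ∂μ' ≠ ∞) {ε : ℝ≥0∞} (hε : ε ≠ 0) :
    ∃ d, ∃ f ∈ N d, jetEnergy w μ μ' (secondJet v - secondJet (f ∘ L d)) < ε := by
  set c := ENNReal.LpAddConst (ENNReal.ofReal w)⁻¹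
  set M := 2 + ∫⁻ k, ‖k‖ₑ ^ w ∂μ'
  have hcM : c * (1 + M) ≠ ∞ := ENNReal.mul_ne_top (ENNReal.LpAddConst_lt_top _).ne
    (by simp [M, hμ'])
  obtain ⟨δ, hδ, hδε⟩ := ENNReal.exists_nnreal_pos_mul_lt hcM hε
  have hPnorm (d : ℕ) : ‖(L d).adjoint ∘L L d‖ ≤ 1 := by
    rw [ContinuousLinearMap.norm_adjoint_comp_self]
    exact mul_le_one₀ (hL d) (norm_nonneg _) (hL d)
  have hPlim := tendsto_jetEnergy_sub_comp hw hv hPnorm hLlim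
    (by simpa [ContinuousLinearMap.adjoint_comp] using hLlim) hφ hvφ hφμ hμ'
  obtain ⟨d, hd⟩ := (hPlim.eventually_lt_const (ENNReal.coe_pos.2 hδ)).exists
  have hh : ContDiff ℝ 2 (v ∘ (L d).adjoint) := hv.comp (L d).adjoint.contDiff
  obtain ⟨f, hf, hfδ⟩ := hNdense d (μ.map (L d)) inferInstance _ hh
    ((lintegral_jetDensity_comp_adjoint_le hw.le hv (hL d) hφ hvφ).trans_lt hφμ.lt_top) δ hδ
  rw [ENNReal.ofReal_coe_nnreal] at hfδ
  refine ⟨d, f, hf, ?_⟩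
  calc jetEnergy w μ μ' (secondJet v - secondJet (f ∘ L d))
      ≤ c * (jetEnergy w μ μ' (secondJet v - secondJet ((v ∘ (L d).adjoint) ∘ L d)) +
          jetEnergy w μ μ' (secondJet ((v ∘ (L d).adjoint) ∘ L d) - secondJet (f ∘ L d))) := by
        rw [← sub_add_sub_cancel (secondJet v) (secondJet ((v ∘ (L d).adjoint) ∘ L d))]
        exact jetEnergy_add_le hw.le ((continuous_secondJet hv).sub
          (continuous_secondJet (hh.comp (L d).contDiff))) _
    _ ≤ c * (δ + M * δ) := by
        gcongr
        · exact hd.le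
        · exact (jetEnergy_comp_sub_comp_le hw.le hh (hNsmooth d f hf) (hL d)).trans (by gcongr)
    _ = δ * (c * (1 + M)) := by ring
    _ < ε := hδε

end Truncation

section EuclCoord

variable {H : Type*} [NormedAddCommGroup H] [InnerProductSpace ℝ H] {e : ℕ → H}

lemma secondCountableTopology_of_dense_span
    (htot : Dense (Submodule.span ℝ (Set.range e) : Set H)) : SecondCountableTopology H := by
  have hsep := (Set.countable_range e).isSeparable.span (R := ℝ).closure
  rw [htot.closure_eq, TopologicalSpace.isSeparable_univ_iff] at hsep
  exact UniformSpace.secondCountable_of_separable H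

/-- The coordinate map `euclCoord e d` as a continuous linear map. Its adjoint is the embedding
`y ↦ ∑ i, y i • e i`, so for orthonormal `e` the composition of both is the orthogonal projection
onto the span of the first `d` vectors. -/
noncomputable def euclCoordL (e : ℕ → H) (d : ℕ) : H →L[ℝ] EuclideanSpace ℝ (Fin d) :=
  (EuclideanSpace.equiv (Fin d) ℝ).symm.toContinuousLinearMap ∘L
    ContinuousLinearMap.pi fun i : Fin d => innerSL ℝ (e i)

lemma euclCoordL_apply (e : ℕ → H) (d : ℕ) (x : H) (i : Fin d) : euclCoordL e d x i = ⟪e i, x⟫ :=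
  rfl

lemma cyl_eq_comp_euclCoordL (e : ℕ → H) {d : ℕ} (f : EuclideanSpace ℝ (Fin d) → ℝ) :
    cyl e f = f ∘ euclCoordL e d :=
  rfl

lemma norm_euclCoordL_le (he : Orthonormal ℝ e) (d : ℕ) : ‖euclCoordL e d‖ ≤ 1 := by
  refine ContinuousLinearMap.opNorm_le_bound _ zero_le_one fun x => ?_
  rw [one_mul, ← sq_le_sq₀ (norm_nonneg _) (norm_nonneg _), EuclideanSpace.norm_sq_eq]
  exact (he.comp _ Fin.val_injective).sum_inner_products_le (s := Finset.univ) x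

variable [CompleteSpace H]

lemma adjoint_euclCoordL_apply (e : ℕ → H) (d : ℕ) (y : EuclideanSpace ℝ (Fin d)) :
    (euclCoordL e d).adjoint y = ∑ i, y i • e i := by
  refine ext_inner_right ℝ fun x => ?_
  rw [ContinuousLinearMap.adjoint_inner_left, sum_inner, PiLp.inner_apply]
  refine Finset.sum_congr rfl fun i _ => ?_
  rw [euclCoordL_apply, real_inner_smul_left, real_inner_comm]
  rfl

theorem tendsto_adjoint_euclCoordL (he : Orthonormal ℝ e)
    (htot : Dense (Submodule.span ℝ (Set.range e) : Set H)) (x : H) :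
    Tendsto (fun d => (euclCoordL e d).adjoint (euclCoordL e d x)) atTop (𝓝 x) := by
  have htop : ⊤ ≤ (Submodule.span ℝ (Set.range e)).topologicalClosure :=
    (Submodule.dense_iff_topologicalClosure_eq_top.1 htot).ge
  refine ((HilbertBasis.mk he htop).hasSum_repr x).tendsto_sum_nat.congr fun d => ?_
  rw [adjoint_euclCoordL_apply, Finset.sum_range]
  simp [euclCoordL_apply, HilbertBasis.repr_apply_apply]

end EuclCoord

section Approximation

open scoped NNReal

lemma monotone_ofReal_mul_one_add_rpow {C q : ℝ} (hC : 0 ≤ C) (hq : 0 ≤ q) :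
    Monotone fun r : ℝ≥0 => ENNReal.ofReal (C * (1 + (r : ℝ) ^ q)) := by
  intro r s hrs
  dsimp only
  gcongr

lemma lintegral_ofReal_mul_one_add_rpow_lt_top {G : Type*} [NormedAddCommGroup G]
    [MeasurableSpace G] {μ : Measure G} [IsFiniteMeasure μ] {C q : ℝ} (hC : 0 ≤ C)
    (hμ : ∫⁻ x, ENNReal.ofReal (‖x‖ ^ q) ∂μ < ⊤) :
    ∫⁻ x, ENNReal.ofReal (C * (1 + (‖x‖₊ : ℝ) ^ q)) ∂μ < ⊤ := by
  have hsplit (x : G) : ENNReal.ofReal (C * (1 + (‖x‖₊ : ℝ) ^ q)) =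
      ENNReal.ofReal C * (1 + ENNReal.ofReal (‖x‖ ^ q)) := by
    rw [coe_nnnorm, ENNReal.ofReal_mul hC, ENNReal.ofReal_add zero_le_one (by positivity),
      ENNReal.ofReal_one]
  simp only [hsplit]
  rw [lintegral_const_mul' _ _ ENNReal.ofReal_ne_top, lintegral_add_left measurable_const,
    lintegral_one]
  exact ENNReal.mul_lt_top ENNReal.ofReal_lt_top (ENNReal.add_lt_top.2 ⟨measure_lt_top μ _, hμ⟩)

theorem hgno_universal_approximation_weighted_sobolev_general
    {H : Type*} [NormedAddCommGroup H] [InnerProductSpace ℝ H] [CompleteSpace H]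
    [MeasurableSpace H] [BorelSpace H]
    {e : ℕ → H} (he : Orthonormal ℝ e) (htot : Dense (Submodule.span ℝ (Set.range e) : Set H))
    {N : ∀ d : ℕ, Set (EuclideanSpace ℝ (Fin d) → ℝ)}
    (hNsmooth : ∀ d, ∀ f ∈ N d, ContDiff ℝ 2 f) {w : ℝ} (hw : 0 < w)
    (hNdense : ∀ (d : ℕ) (ν : Measure (EuclideanSpace ℝ (Fin d))), IsFiniteMeasure ν →
      ∀ h : EuclideanSpace ℝ (Fin d) → ℝ, ContDiff ℝ 2 h →
      (∫⁻ y, ENNReal.ofReal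
          (|h y| ^ w + ‖gradient h y‖ ^ w + ‖fderiv ℝ (gradient h) y‖ ^ w) ∂ν < ⊤) →
      ∀ ε > 0, ∃ f ∈ N d,
        ∫⁻ y, ENNReal.ofReal
            (|h y - f y| ^ w + ‖gradient h y - gradient f y‖ ^ w +
              ‖fderiv ℝ (gradient h) y - fderiv ℝ (gradient f) y‖ ^ w) ∂ν
          < ENNReal.ofReal ε)
    {μ μ' : Measure H} [IsFiniteMeasure μ] [SFinite μ']
    {φ : ℝ≥0 → ℝ≥0∞} (hφ : Monotone φ) (hφμ : ∫⁻ x, φ ‖x‖₊ ∂μ < ⊤)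
    (hμ'w : ∫⁻ h, ENNReal.ofReal (‖h‖ ^ w) ∂μ' < ⊤)
    {v : H → ℝ} (hv : ContDiff ℝ 2 v)
    (hgrowth : ∀ x, ENNReal.ofReal
      (|v x| ^ w + ‖gradient v x‖ ^ w + ‖fderiv ℝ (gradient v) x‖ ^ w) ≤ φ ‖x‖₊)
    {ε : ℝ} (hε : 0 < ε) :
    ∃ (d : ℕ) (f : EuclideanSpace ℝ (Fin d) → ℝ), f ∈ N d ∧
      (∫⁻ x, ENNReal.ofReal (|v x - cyl e f x| ^ w) ∂μ < ENNReal.ofReal ε) ∧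
      (∫⁻ x, ENNReal.ofReal (‖gradient v x - gradient (cyl e f) x‖ ^ w) ∂μ
        < ENNReal.ofReal ε) ∧
      (∫⁻ p : H × H, ENNReal.ofReal
          (‖fderiv ℝ (gradient v) p.1 p.2 - fderiv ℝ (gradient (cyl e f)) p.1 p.2‖ ^ w)
          ∂(μ.prod μ') < ENNReal.ofReal ε) := by
  have := secondCountableTopology_of_dense_span htot
  simp only [ofReal_eq_jetDensity hw.le] at hNdense hgrowth
  simp only [← Real.norm_eq_abs, ofReal_norm_rpow hw.le, cyl_eq_comp_euclCoordL] at hμ'w ⊢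
  obtain ⟨d, f, hf, hlt⟩ := exists_comp_jetEnergy_sub_lt hw hNsmooth hNdense
    (norm_euclCoordL_le he) (tendsto_adjoint_euclCoordL he htot) hv hφ hgrowth hφμ.ne hμ'w.ne
    (ENNReal.ofReal_pos.2 hε).ne'
  exact ⟨d, f, hf, (le_self_add.trans le_self_add).trans_lt hlt,
    (le_add_self.trans le_self_add).trans_lt hlt, le_add_self.trans_lt hlt⟩

end Approximation

/-- universal approximation in weighted Sobolev norms (Theorem UAT_L2_noL):
Hilbert–Galerkin Neural Operators built from classes `𝒩 d` of finite-dimensional C² functions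
having the weighted Sobolev density property approximate every `v ∈ C²_{w,q}(H)` in the
weighted Sobolev-type norm determined by Borel probability measures `μ, μ'` with
`‖μ‖_q < ∞`, `‖μ'‖_w < ∞`. -/
theorem hgno_universal_approximation_weighted_sobolev
    {H : Type*} [NormedAddCommGroup H] [InnerProductSpace ℝ H] [CompleteSpace H]
    [MeasurableSpace H] [BorelSpace H]
    (e : ℕ → H) (he : Orthonormal ℝ e)
    (htot : Dense ((Submodule.span ℝ (Set.range e) : Submodule ℝ H) : Set H))
    (N : ∀ d : ℕ, Set (EuclideanSpace ℝ (Fin d) → ℝ))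
    (hNsmooth : ∀ d : ℕ, ∀ f ∈ N d, ContDiff ℝ 2 f)
    (hNdense : ∀ (d : ℕ) (w' : ℝ), 1 ≤ w' →
      ∀ ν : Measure (EuclideanSpace ℝ (Fin d)), IsFiniteMeasure ν →
      ∀ h : EuclideanSpace ℝ (Fin d) → ℝ, ContDiff ℝ 2 h →
      (∫⁻ y, ENNReal.ofReal
          (|h y| ^ w' + ‖gradient h y‖ ^ w' + ‖fderiv ℝ (gradient h) y‖ ^ w') ∂ν < ⊤) →
      ∀ ε > 0, ∃ f ∈ N d,
        ∫⁻ y, ENNReal.ofReal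
            (|h y - f y| ^ w' + ‖gradient h y - gradient f y‖ ^ w' +
              ‖fderiv ℝ (gradient h) y - fderiv ℝ (gradient f) y‖ ^ w') ∂ν
          < ENNReal.ofReal ε)
    (w q : ℝ) (hw : 1 ≤ w) (hq : 1 ≤ q)
    (μ μ' : Measure H) [IsProbabilityMeasure μ] [IsProbabilityMeasure μ']
    (hμq : ∫⁻ x, ENNReal.ofReal (‖x‖ ^ q) ∂μ < ⊤)
    (hμ'w : ∫⁻ h, ENNReal.ofReal (‖h‖ ^ w) ∂μ' < ⊤)
    (v : H → ℝ) (hv : ContDiff ℝ 2 v)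
    (C : ℝ) (hC : 0 < C)
    (hgrowth : ∀ x : H,
      |v x| ^ w + ‖gradient v x‖ ^ w + ‖fderiv ℝ (gradient v) x‖ ^ w ≤ C * (1 + ‖x‖ ^ q))
    (ε : ℝ) (hε : 0 < ε) :
    ∃ (d : ℕ) (f : EuclideanSpace ℝ (Fin d) → ℝ), f ∈ N d ∧
      (∫⁻ x, ENNReal.ofReal (|v x - cyl e f x| ^ w) ∂μ < ENNReal.ofReal ε) ∧
      (∫⁻ x, ENNReal.ofReal (‖gradient v x - gradient (cyl e f) x‖ ^ w) ∂μ
        < ENNReal.ofReal ε) ∧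
      (∫⁻ p : H × H, ENNReal.ofReal
          (‖fderiv ℝ (gradient v) p.1 p.2 - fderiv ℝ (gradient (cyl e f)) p.1 p.2‖ ^ w)
          ∂(μ.prod μ') < ENNReal.ofReal ε) := by
  exact hgno_universal_approximation_weighted_sobolev_general he htot hNsmooth (by linarith)
    (fun d => hNdense d w hw) (monotone_ofReal_mul_one_add_rpow hC.le (by linarith))
    (lintegral_ofReal_mul_one_add_rpow_lt_top hC.le hμq) hμ'w hv
    (fun x => ENNReal.ofReal_le_ofReal (hgrowth x)) hε
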